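/- arXiv:1010.3743 — 2 statements merged into one kernel-verified Lean document; each statement's English description precedes it below -/
import Mathlib

section
/- Let ω be a holomorphic 1-form and ψ a holomorphic p-form on a connected open subset U of C^ℓ with ω ∧ ψ = 0. Then every irreducible component of V(ω) \ V(ψ) has codimension at most p in C^ℓ, where V(η) denotes the zero locus of the form η on U. -/
/-!
Near a point of `V(ω) \ V(ψ)` some coefficient `A_I` does not vanish. For `j ∉ I`, the coefficient
of `ω ∧ ψ` at `I ∪ {j}` then expresses `b_j` through the `b_i` with `i ∈ I`, so that locally `V(ω)`
is cut out by `p` holomorphic functions.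

It remains to see that a fibre `Z` of a holomorphic map `f : E → G` has real dimension at least
`dim_ℝ E - dim_ℝ G` at each of its points `x₀`. Were it smaller, a generic linear map `T` from `E`
to a space of dimension `dim_ℝ E - dim_ℝ G` would vanish on `Z - x₀` only at `0`. Then `(f, T)` is a
holomorphic map between spaces of equal dimension with an isolated point `x₀` in its fibre, hence
open at `x₀`, so `T` maps `Z` onto a neighbourhood of `T x₀`. As `T` is Lipschitz, this bounds the
dimension of `Z` from below, a contradiction.

Openness at an isolated point of the fibre rests on a maximum principle: on the zero set of a
holomorphic map whose derivative is nowhere injective, the real part of a holomorphic function is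
bounded by its values on the frontier.
-/

open Filter Function Metric Module Set Topology
open scoped ENNReal InnerProductSpace

section MaximumPrinciple

theorem frequently_re_le {E : Type*} [NormedAddCommGroup E] [NormedSpace ℂ E] {h : E → ℂ} {z : E}
    [(𝓝[≠] z).NeBot] (hh : ∀ᶠ w in 𝓝 z, DifferentiableAt ℂ h w) :
    ∃ᶠ w in 𝓝[≠] z, (h z).re ≤ (h w).re := by
  intro hlt
  simp only [not_le] at hlt
  have hmax : IsLocalMax (norm ∘ fun w => Complex.exp (h w)) z := by
    filter_upwards [eventually_nhdsWithin_iff.1 hlt] with w hw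
    rcases eq_or_ne w z with rfl | hwz
    · exact le_rfl
    · simpa [Complex.norm_exp] using (hw hwz).le
  have hconst := Complex.eventually_eq_of_isLocalMax_norm (hh.mono fun w hw => hw.cexp) hmax
  obtain ⟨w, hw, hexp⟩ := (hlt.and (hconst.filter_mono nhdsWithin_le_nhds)).exists
  have hre : (h w).re = (h z).re := by simpa [Complex.norm_exp] using congrArg norm hexp
  exact hw.ne hre

/- Up to the error `o(|s|²)` coming from `f`, the function differs from `ε ‖v‖² |s|²` by the real
part of a holomorphic function. -/
theorem not_isLocalMax_re_add_norm_sq_sub {E G : Type*} [NormedAddCommGroup E]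
    [InnerProductSpace ℂ E] [NormedAddCommGroup G] [InnerProductSpace ℂ G] {h : ℂ → ℂ} {f : ℂ → G}
    {u v : E} {ε M : ℝ} (hε : 0 < ε) (hv : v ≠ 0) (hh : ∀ᶠ s in 𝓝 0, DifferentiableAt ℂ h s)
    (hf : ∀ᶠ s in 𝓝 0, DifferentiableAt ℂ f s) (hf' : HasDerivAt f 0 0) :
    ¬ IsLocalMax (fun s : ℂ => (h s).re + ε * ‖u + s • v‖ ^ 2 - M * ‖f s‖ ^ 2) 0 := by
  intro hmax
  let k : ℂ → ℂ := fun s => h s + (2 * ε : ℝ) * (s * ⟪u, v⟫_ℂ) - (2 * M : ℝ) * ⟪f 0, f s⟫_ℂ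
  have hk : ∀ᶠ s in 𝓝 0, DifferentiableAt ℂ k s := by
    filter_upwards [hh, hf] with s hhs hfs
    have hinner : DifferentiableAt ℂ (fun s => ⟪f 0, f s⟫_ℂ) s :=
      (innerSL ℂ (f 0)).differentiableAt.comp s hfs
    fun_prop
  have hsmall : ∀ᶠ s in 𝓝[≠] (0 : ℂ), M * ‖f s - f 0‖ ^ 2 < ε * ‖s • v‖ ^ 2 := by
    have ho : (fun s => M * ‖f s - f 0‖ ^ 2) =o[𝓝 0] fun s : ℂ => ‖s‖ ^ 2 := by
      have hsub := hf'.isLittleO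
      simp only [smul_zero, sub_zero] at hsub
      exact (hsub.norm_norm.pow two_pos).const_mul_left M
    have hpos : 0 < ε * ‖v‖ ^ 2 / 2 := by positivity
    filter_upwards [(ho.bound hpos).filter_mono nhdsWithin_le_nhds, self_mem_nhdsWithin]
      with s hs hs0
    have hs2 : 0 < ε * ‖v‖ ^ 2 * ‖s‖ ^ 2 := by
      have := norm_pos_iff.2 hs0
      positivity
    rw [norm_smul, mul_pow]
    rw [Real.norm_eq_abs, Real.norm_eq_abs, abs_sq] at hs
    linarith [le_abs_self (M * ‖f s - f 0‖ ^ 2)]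
  obtain ⟨s, hks, hmaxs, hs⟩ := ((frequently_re_le hk).and_eventually
    ((hmax.filter_mono nhdsWithin_le_nhds).and hsmall)).exists
  have hu : ‖u + s • v‖ ^ 2 = ‖u‖ ^ 2 + 2 * (s * ⟪u, v⟫_ℂ).re + ‖s • v‖ ^ 2 := by
    rw [norm_add_sq (𝕜 := ℂ), inner_smul_right]
    rfl
  have hfs : ‖f s‖ ^ 2 = 2 * (⟪f 0, f s⟫_ℂ).re - ‖f 0‖ ^ 2 + ‖f s - f 0‖ ^ 2 := by
    rw [norm_sub_rev, norm_sub_sq (𝕜 := ℂ)]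
    simp only [RCLike.re_to_complex]
    ring
  have hf0 : (⟪f 0, f 0⟫_ℂ).re = ‖f 0‖ ^ 2 := inner_self_eq_norm_sq (𝕜 := ℂ) (f 0)
  simp only [k, Complex.sub_re, Complex.add_re, Complex.re_ofReal_mul, hf0, zero_mul,
    mul_zero, add_zero] at hks
  simp only [hu, hfs, zero_smul, add_zero] at hmaxs
  linarith

theorem isCompact_inter_preimage {X Y : Type*} [TopologicalSpace X] [TopologicalSpace Y]
    {K : Set X} {t : Set Y} {f : X → Y} (hK : IsCompact K) (hf : ContinuousOn f K)
    (ht : IsClosed t) : IsCompact (K ∩ f ⁻¹' t) := by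
  obtain ⟨u, hu, hfu⟩ := continuousOn_iff_isClosed.1 hf t ht
  rw [inter_comm, hfu, inter_comm]
  exact hK.inter_right hu

theorem exists_pos_forall_sub_mul_lt {X : Type*} [TopologicalSpace X] {S : Set X}
    (hS : IsCompact S) {g q : X → ℝ} (hg : ContinuousOn g S) (hq : ContinuousOn q S) {a : ℝ}
    (hq0 : ∀ x ∈ S, 0 ≤ q x) (hlt : ∀ x ∈ S, q x = 0 → g x < a) :
    ∃ M > 0, ∀ x ∈ S, g x - M * q x < a := by
  let C := S ∩ g ⁻¹' Ici a
  have hqpos : ∀ x ∈ C, 0 < q x := fun x hx =>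
    (hq0 x hx.1).lt_of_ne fun h => hx.2.not_gt (hlt x hx.1 h.symm)
  have hC : IsCompact C := isCompact_inter_preimage hS hg isClosed_Ici
  obtain ⟨B, hB⟩ := hC.bddAbove_image (f := fun x => (g x - a) / q x)
    (((hg.mono inter_subset_left).sub continuousOn_const).div (hq.mono inter_subset_left)
      fun x hx => (hqpos x hx).ne')
  refine ⟨max B 0 + 1, by positivity, fun x hx => ?_⟩
  rcases lt_or_ge (g x) a with hgx | hgx
  · have : 0 ≤ (max B 0 + 1) * q x := mul_nonneg (by positivity) (hq0 x hx)
    linarith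
  · have hle : (g x - a) / q x ≤ B := hB ⟨x, ⟨hx, hgx⟩, rfl⟩
    have hltM : (g x - a) / q x < max B 0 + 1 := by linarith [le_max_left B 0]
    rw [div_lt_iff₀ (hqpos x ⟨hx, hgx⟩)] at hltM
    linarith

theorem exists_pos_forall_add_mul_sub_mul_lt {X : Type*} [TopologicalSpace X] {S : Set X}
    (hS : IsCompact S) {u r q : X → ℝ} (hu : ContinuousOn u S) (hr : ContinuousOn r S)
    (hq : ContinuousOn q S) {a : ℝ} (hq0 : ∀ x ∈ S, 0 ≤ q x)
    (hlt : ∀ x ∈ S, q x = 0 → u x < a) :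
    ∃ ε > 0, ∃ M, ∀ x ∈ S, u x + ε * r x - M * q x < a := by
  obtain ⟨N, hN, hNlt⟩ : ∃ N > 0, ∀ x ∈ S ∩ q ⁻¹' {0}, r x - N * (a - u x) < 0 :=
    exists_pos_forall_sub_mul_lt (isCompact_inter_preimage hS hq isClosed_singleton)
      (hr.mono inter_subset_left) (continuousOn_const.sub (hu.mono inter_subset_left))
      (fun x hx => sub_nonneg.2 (hlt x hx.1 hx.2).le)
      (fun x hx h0 => absurd h0 (sub_pos.2 (hlt x hx.1 hx.2)).ne')
  obtain ⟨M, -, hM⟩ := exists_pos_forall_sub_mul_lt hS (g := fun x => u x + N⁻¹ * r x) (a := a)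
    (hu.add (continuousOn_const.mul hr)) hq hq0 fun x hx hqx => by
      have hltN := hNlt x ⟨hx, hqx⟩
      rw [sub_neg, ← inv_mul_lt_iff₀ hN] at hltN
      linarith
  exact ⟨N⁻¹, inv_pos.2 hN, M, hM⟩

theorem injective_fderiv_of_isLocalMax {E H G : Type*} [NormedAddCommGroup E] [NormedSpace ℂ E]
    [NormedAddCommGroup H] [InnerProductSpace ℂ H] [NormedAddCommGroup G] [InnerProductSpace ℂ G]
    {h : E → ℂ} {f : E → G} {L : E →L[ℂ] H} {y : E} {ε M : ℝ} (hε : 0 < ε) (hL : Injective L)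
    (hh : ∀ᶠ x in 𝓝 y, DifferentiableAt ℂ h x) (hf : ∀ᶠ x in 𝓝 y, DifferentiableAt ℂ f x)
    (hmax : IsLocalMax (fun x => (h x).re + ε * ‖L x‖ ^ 2 - M * ‖f x‖ ^ 2) y) :
    Injective (fderiv ℂ f y) := by
  refine (injective_iff_map_eq_zero _).2 fun v hfv => by_contra fun hv => ?_
  have hline (s : ℂ) : HasDerivAt (fun s : ℂ => y + s • v) v s := by
    simpa using ((hasDerivAt_id s).smul_const v).const_add y
  have htendsto : Tendsto (fun s : ℂ => y + s • v) (𝓝 0) (𝓝 y) := by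
    simpa using (hline 0).continuousAt.tendsto
  refine not_isLocalMax_re_add_norm_sq_sub (h := fun s => h (y + s • v))
    (f := fun s => f (y + s • v)) (u := L y) (v := L v) (M := M) hε
    ((map_ne_zero_iff L hL).2 hv) ?_ ?_ ?_ ?_
  · filter_upwards [htendsto.eventually hh] with s hs
    exact hs.comp s (hline s).differentiableAt
  · filter_upwards [htendsto.eventually hf] with s hs
    exact hs.comp s (hline s).differentiableAt
  · have hfy : HasFDerivAt f (fderiv ℂ f y) (y + (0 : ℂ) • v) := by
      simpa using hf.self_of_nhds.hasFDerivAt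
    simpa [hfv, comp_def] using hfy.comp_hasDerivAt 0 (hline 0)
  · filter_upwards [htendsto.eventually hmax] with s hs
    simpa using hs

theorem nonempty_continuousLinearEquiv_euclideanSpace (E : Type*) [NormedAddCommGroup E]
    [NormedSpace ℂ E] [FiniteDimensional ℂ E] :
    Nonempty (E ≃L[ℂ] EuclideanSpace ℂ (Fin (finrank ℂ E))) :=
  FiniteDimensional.nonempty_continuousLinearEquiv_of_finrank_eq (by simp)

variable {E G : Type*} [NormedAddCommGroup E] [NormedSpace ℂ E] [FiniteDimensional ℂ E]
  [NormedAddCommGroup G] [NormedSpace ℂ G] [FiniteDimensional ℂ G]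

/- With `ε` small and `M` large, the maximum of `Re h + ε ‖x‖² - M ‖f x‖²` over `K` cannot lie on
the frontier, hence contradicts `injective_fderiv_of_isLocalMax`. -/
theorem exists_mem_frontier_re_le {K : Set E} (hK : IsCompact K) {f : E → G} {h : E → ℂ}
    (hf : ContinuousOn f K) (hfd : DifferentiableOn ℂ f (interior K))
    (hf' : ∀ x ∈ interior K, ¬ Injective (fderiv ℂ f x))
    (hh : ContinuousOn h K) (hhd : DifferentiableOn ℂ h (interior K))
    {x₁ : E} (hx₁ : x₁ ∈ K) (hfx₁ : f x₁ = 0) :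
    ∃ x ∈ frontier K, f x = 0 ∧ (h x₁).re ≤ (h x).re := by
  by_contra! hlt
  obtain ⟨e⟩ := nonempty_continuousLinearEquiv_euclideanSpace E
  obtain ⟨e'⟩ := nonempty_continuousLinearEquiv_euclideanSpace G
  have hFK : frontier K ⊆ K := hK.isClosed.frontier_subset
  have hu : ContinuousOn (fun x => (h x).re) K := Complex.continuous_re.comp_continuousOn hh
  have hr : ContinuousOn (fun x => ‖e x‖ ^ 2) K := by fun_prop
  have hq : ContinuousOn (fun x => ‖e' (f x)‖ ^ 2) K :=
    (e'.continuous.comp_continuousOn hf).norm.pow 2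
  obtain ⟨ε, hε, M, hM⟩ := exists_pos_forall_add_mul_sub_mul_lt
    (hK.of_isClosed_subset isClosed_frontier hFK) (hu.mono hFK) (hr.mono hFK) (hq.mono hFK)
    (fun x _ => by positivity) fun x hx hfx => hlt x hx (by simpa using hfx)
  obtain ⟨y, hyK, hymax⟩ := hK.exists_isMaxOn
    (f := fun x => (h x).re + ε * ‖e x‖ ^ 2 - M * ‖e' (f x)‖ ^ 2) ⟨x₁, hx₁⟩
    ((hu.add (continuousOn_const.mul hr)).sub (continuousOn_const.mul hq))
  have hy : y ∈ interior K := by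
    refine by_contra fun hy => (hM y (hK.isClosed.frontier_eq ▸ ⟨hyK, hy⟩)).not_ge ?_
    have hle := isMaxOn_iff.1 hymax x₁ hx₁
    simp only [hfx₁, map_zero, norm_zero, ne_eq, OfNat.ofNat_ne_zero, not_false_eq_true, zero_pow,
      mul_zero, sub_zero] at hle
    exact le_trans (le_add_of_nonneg_right (by positivity)) hle
  have hev : ∀ᶠ x in 𝓝 y, x ∈ interior K := isOpen_interior.mem_nhds hy
  have hinj : Injective (fderiv ℂ (fun x => e' (f x)) y) := by
    refine injective_fderiv_of_isLocalMax (h := h) (f := fun x => e' (f x)) (M := M)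
      (L := (e : E →L[ℂ] EuclideanSpace ℂ (Fin (finrank ℂ E)))) hε e.injective
      (hev.mono fun x hx => hhd.differentiableAt (isOpen_interior.mem_nhds hx))
      (hev.mono fun x hx => ?_) (hymax.isLocalMax (mem_interior_iff_mem_nhds.1 hy))
    exact e'.differentiableAt.comp x (hfd.differentiableAt (isOpen_interior.mem_nhds hx))
  refine hf' y hy fun v w hvw => hinj ?_
  rw [show (fun x => e' (f x)) = e' ∘ f from rfl, e'.comp_fderiv]
  exact congrArg e' hvw

theorem exists_eq_of_norm_sub_lt {K : Set E} (hK : IsCompact K) {f : E → G} {t : E → ℂ}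
    (hf : ContinuousOn f K) (hfd : DifferentiableOn ℂ f (interior K))
    (hf' : ∀ x ∈ interior K, ¬ Injective (fderiv ℂ f x))
    (ht : ContinuousOn t K) (htd : DifferentiableOn ℂ t (interior K))
    {x₀ : E} (hx₀ : x₀ ∈ K) (hfx₀ : f x₀ = 0) {a : ℂ}
    (hlt : ∀ x ∈ frontier K, f x = 0 → ‖t x₀ - a‖ < ‖t x - a‖) :
    ∃ x ∈ K, f x = 0 ∧ t x = a := by
  by_contra! hne
  have hd : ContinuousOn (fun x => ‖t x - a‖) K := (ht.sub continuousOn_const).norm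
  obtain ⟨η, hη, hηle⟩ : ∃ η > 0, ∀ x ∈ K ∩ f ⁻¹' {0}, η ≤ ‖t x - a‖ :=
    (isCompact_inter_preimage hK hf isClosed_singleton).exists_forall_le'
      (hd.mono inter_subset_left) fun x hx => norm_sub_pos_iff.2 (hne x hx.1 hx.2)
  let K' := K ∩ (fun x => ‖t x - a‖) ⁻¹' Ici (η / 2)
  have hK'K : K' ⊆ K := inter_subset_left
  have hta (x) (hx : x ∈ K') : t x - a ≠ 0 := norm_pos_iff.1 ((half_pos hη).trans_le hx.2)
  have hint : interior K' ⊆ interior K := interior_mono hK'K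
  have hK' : IsCompact K' := isCompact_inter_preimage hK hd isClosed_Ici
  have hx₀K' : x₀ ∈ K' := ⟨hx₀, (half_le_self hη.le).trans (hηle x₀ ⟨hx₀, hfx₀⟩)⟩
  have hh : ContinuousOn (fun x => (t x₀ - a) * (t x - a)⁻¹) K' :=
    continuousOn_const.mul (((ht.mono hK'K).sub continuousOn_const).inv₀ hta)
  have hhd : DifferentiableOn ℂ (fun x => (t x₀ - a) * (t x - a)⁻¹) (interior K') :=
    (((htd.mono hint).sub_const a).fun_inv fun x hx => hta x (interior_subset hx)).const_mul _
  obtain ⟨x, hx, hfx, hre⟩ := exists_mem_frontier_re_le hK' (hf.mono hK'K) (hfd.mono hint)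
    (fun x hx => hf' x (hint hx)) hh hhd hx₀K' hfx₀
  rw [hK'.isClosed.frontier_eq] at hx
  have hxK : x ∈ K := hx.1.1
  have hxfr : x ∈ frontier K := by
    refine hK.isClosed.frontier_eq ▸ ⟨hxK, fun hxint => hx.2 (mem_interior_iff_mem_nhds.2 ?_)⟩
    have hKx := mem_interior_iff_mem_nhds.1 hxint
    filter_upwards [hKx, (hd.continuousAt hKx).eventually
      (lt_mem_nhds ((half_lt_self hη).trans_le (hηle x ⟨hxK, hfx⟩)))] with z hzK hz
    exact ⟨hzK, le_of_lt hz⟩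
  have hle : 1 ≤ ‖(t x₀ - a) * (t x - a)⁻¹‖ := by
    have hone := hre.trans (Complex.re_le_norm _)
    rwa [mul_inv_cancel₀ (hta x₀ hx₀K'), Complex.one_re] at hone
  rw [← div_eq_mul_inv, norm_div, one_le_div (norm_sub_pos_iff.2 (hne x hxK hfx))] at hle
  exact hle.not_gt (hlt x hxfr hfx)

end MaximumPrinciple

section OpenMapping

variable {E G : Type*} [NormedAddCommGroup E] [NormedSpace ℂ E] [FiniteDimensional ℂ E]
  [NormedAddCommGroup G] [NormedSpace ℂ G] [FiniteDimensional ℂ G]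

theorem not_injective_fderiv_of_eventually_eq_zero (hdim : finrank ℂ E = finrank ℂ G) {f : E → G}
    {x : E} {τ : G →L[ℂ] ℂ} (hτ : τ ≠ 0) (hf : DifferentiableAt ℂ f x)
    (hτf : ∀ᶠ y in 𝓝 x, τ (f y) = 0) : ¬ Injective (fderiv ℂ f x) := by
  intro hinj
  have hsurj : Surjective (fderiv ℂ f x) :=
    (LinearMap.injective_iff_surjective_of_finrank_eq_finrank hdim
      (f := (fderiv ℂ f x : E →ₗ[ℂ] G))).1 hinj
  have hcomp : τ.comp (fderiv ℂ f x) = 0 :=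
    (τ.hasFDerivAt.comp x hf.hasFDerivAt).unique
      ((hasFDerivAt_const (0 : ℂ) x).congr_of_eventuallyEq hτf)
  refine hτ (ContinuousLinearMap.ext fun w => ?_)
  obtain ⟨v, rfl⟩ := hsurj w
  exact DFunLike.congr_fun hcomp v

/- Project along the line through `0` and `c`: over that line `F` reduces to a scalar function, to
which the minimum modulus principle `exists_eq_of_norm_sub_lt` applies. -/
theorem mem_image_of_forall_mem_frontier (hdim : finrank ℂ E = finrank ℂ G) {K : Set E}
    (hK : IsCompact K) {F : E → G} (hF : ContinuousOn F K)
    (hFd : DifferentiableOn ℂ F (interior K)) {x₀ : E} (hx₀ : x₀ ∈ K) (hFx₀ : F x₀ = 0) {c : G}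
    (hc : ∀ x ∈ frontier K, ∀ s : ℂ, F x = s • c → 1 < ‖s - 1‖) : c ∈ F '' K := by
  rcases eq_or_ne c 0 with rfl | hc0
  · exact ⟨x₀, hx₀, hFx₀⟩
  obtain ⟨τ, hτ⟩ := SeparatingDual.exists_eq_one (R := ℂ) hc0
  have hτ0 : τ ≠ 0 := fun h => one_ne_zero (hτ.symm.trans (DFunLike.congr_fun h c))
  let P : G →L[ℂ] G := .id ℂ G - τ.smulRight c
  have hτP (z : G) : τ (P z) = 0 := by simp [P, hτ]
  have hP {z : G} (hz : P z = 0) : z = τ z • c := sub_eq_zero.1 hz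
  have hPd : DifferentiableOn ℂ (fun x => P (F x)) (interior K) :=
    P.differentiable.comp_differentiableOn hFd
  have hP' : ∀ x ∈ interior K, ¬ Injective (fderiv ℂ (fun x => P (F x)) x) := fun x hx =>
    not_injective_fderiv_of_eventually_eq_zero hdim hτ0
      (hPd.differentiableAt (isOpen_interior.mem_nhds hx)) (.of_forall fun _ => hτP _)
  obtain ⟨x, hx, hPx, hτx⟩ : ∃ x ∈ K, P (F x) = 0 ∧ τ (F x) = 1 :=
    exists_eq_of_norm_sub_lt hK (P.continuous.comp_continuousOn hF) hPd hP'
      (τ.continuous.comp_continuousOn hF) (τ.differentiable.comp_differentiableOn hFd) hx₀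
      (by simp [hFx₀]) fun x hx hPx => by simpa [hFx₀] using hc x hx _ (hP hPx)
  exact ⟨x, hx, by rw [hP hPx, hτx, one_smul]⟩

theorem ball_subset_image_closedBall (hdim : finrank ℂ E = finrank ℂ G) {F : E → G} {x₀ : E}
    {r ε : ℝ} (hF : DiffContOnCl ℂ F (ball x₀ r)) (hr : 0 < r)
    (hε : ∀ x ∈ sphere x₀ r, ε ≤ ‖F x - F x₀‖) :
    ball (F x₀) (ε / 2) ⊆ F '' closedBall x₀ r := by
  intro y hy
  rw [mem_ball_iff_norm] at hy
  have := FiniteDimensional.proper_rclike ℂ E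
  have hfrontier : ∀ x ∈ frontier (closedBall x₀ r), ∀ s : ℂ,
      F x - F x₀ = s • (y - F x₀) → 1 < ‖s - 1‖ := by
    intro x hx s hs
    rw [frontier_closedBall x₀ hr.ne'] at hx
    have hle := hε x hx
    rw [hs, norm_smul] at hle
    have htwo : 2 < ‖s‖ := by nlinarith [norm_nonneg (y - F x₀)]
    have hsub := norm_sub_norm_le s 1
    rw [norm_one] at hsub
    linarith
  obtain ⟨x, hx, hFx⟩ := mem_image_of_forall_mem_frontier hdim (isCompact_closedBall x₀ r)
    (hF.continuousOn_ball.sub continuousOn_const)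
    ((interior_closedBall x₀ hr.ne').symm ▸ hF.differentiableOn.sub_const (F x₀))
    (mem_closedBall_self hr.le) (sub_self _) hfrontier
  exact ⟨x, hx, sub_left_injective hFx⟩

theorem nhds_le_map_nhds_of_isolated (hdim : finrank ℂ E = finrank ℂ G) {F : E → G} {x₀ : E}
    (hF : AnalyticAt ℂ F x₀) (hiso : ∀ᶠ x in 𝓝[≠] x₀, F x ≠ F x₀) :
    𝓝 (F x₀) ≤ map F (𝓝 x₀) := by
  have := FiniteDimensional.proper_rclike ℂ E
  have := FiniteDimensional.complete ℂ G
  intro W hW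
  obtain ⟨r, hr, hball⟩ := nhds_basis_closedBall.mem_iff.1 (inter_mem (mem_map.1 hW)
    (hF.eventually_analyticAt.and (eventually_nhdsWithin_iff.1 hiso)))
  have hFd : DifferentiableOn ℂ F (closedBall x₀ r) := fun x hx =>
    (hball hx).2.1.differentiableAt.differentiableWithinAt
  have hsub : closure (ball x₀ r) ⊆ closedBall x₀ r := closure_ball_subset_closedBall
  obtain ⟨ε, hε, hεle⟩ : ∃ ε > 0, ∀ x ∈ sphere x₀ r, ε ≤ ‖F x - F x₀‖ :=
    (isCompact_sphere x₀ r).exists_forall_le'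
      (hFd.continuousOn.mono sphere_subset_closedBall |>.sub continuousOn_const).norm fun x hx =>
        norm_sub_pos_iff.2 ((hball (sphere_subset_closedBall hx)).2.2 (ne_of_mem_sphere hx hr.ne'))
  refine mem_of_superset (ball_mem_nhds (F x₀) (half_pos hε)) ?_
  refine (ball_subset_image_closedBall hdim (hFd.mono hsub).diffContOnCl hr hεle).trans ?_
  exact image_subset_iff.2 fun x hx => (hball hx).1

end OpenMapping

section Dimension

theorem exists_forall_add_smul_eq_zero_imp {𝕜 E F : Type*} [RCLike 𝕜] [NormedAddCommGroup E]
    [NormedSpace 𝕜 E] [SecondCountableTopology E] [NormedAddCommGroup F] [NormedSpace 𝕜 F]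
    {Z : Set E} (hZ : dimH Z < dimH (univ : Set F)) (T : E →L[𝕜] F) (φ : E →L[𝕜] 𝕜) :
    ∃ w : F, ∀ z ∈ Z, T z + φ z • w = 0 → φ z = 0 := by
  let σ : E → F := fun z => -((φ z)⁻¹ • T z)
  have hσ : dimH (σ '' {z ∈ Z | φ z ≠ 0}) < dimH (univ : Set F) := by
    refine (dimH_image_le_of_locally_lipschitzOn fun z hz => ?_).trans_lt
      ((dimH_mono (sep_subset Z _)).trans_lt hZ)
    have hσz : ContDiffAt 𝕜 1 σ z :=
      ((φ.contDiff.contDiffAt.inv hz.2).smul T.contDiff.contDiffAt).neg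
    obtain ⟨C, t, ht, hC⟩ := hσz.exists_lipschitzOnWith
    exact ⟨C, t, mem_nhdsWithin_of_mem_nhds ht, hC⟩
  obtain ⟨w, hw⟩ := (ne_univ_iff_exists_notMem _).1 fun h => hσ.ne (congrArg dimH h)
  refine ⟨w, fun z hz h0 => by_contra fun hφ => hw ⟨z, ⟨hz, hφ⟩, ?_⟩⟩
  simp only [σ]
  rw [eq_neg_of_add_eq_zero_left h0, smul_neg, neg_neg, inv_smul_smul₀ hφ]

theorem exists_continuousLinearMap_forall_eq_zero {𝕜 E F : Type*} [RCLike 𝕜]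
    [NormedAddCommGroup E] [NormedSpace 𝕜 E] [FiniteDimensional 𝕜 E] [NormedAddCommGroup F]
    [NormedSpace 𝕜 F] {Z : Set E} (hZ : dimH Z < dimH (univ : Set F)) :
    ∃ T : E →L[𝕜] F, ∀ z ∈ Z, T z = 0 → z = 0 := by
  have := FiniteDimensional.proper_rclike 𝕜 E
  let B := finBasis 𝕜 E
  suffices H : ∀ s : Finset (Fin (finrank 𝕜 E)),
      ∃ T : E →L[𝕜] F, ∀ z ∈ Z, T z = 0 → ∀ i ∈ s, B.coord i z = 0 by
    obtain ⟨T, hT⟩ := H Finset.univ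
    exact ⟨T, fun z hz hTz => B.forall_coord_eq_zero_iff.1 fun i => hT z hz hTz i (by simp)⟩
  intro s
  induction s using Finset.induction_on with
  | empty => exact ⟨0, by simp⟩
  | insert a s _ ih =>
    obtain ⟨T, hT⟩ := ih
    let φ : E →L[𝕜] 𝕜 := (B.coord a).toContinuousLinearMap
    obtain ⟨w, hw⟩ := exists_forall_add_smul_eq_zero_imp hZ T φ
    refine ⟨T + φ.smulRight w, fun z hz hTz => ?_⟩
    have hφz : φ z = 0 := hw z hz hTz
    exact Finset.forall_mem_insert _ _ _ |>.2 ⟨hφz, hT z hz (by simpa [hφz] using hTz)⟩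

variable {E G : Type*} [NormedAddCommGroup E] [NormedSpace ℂ E] [FiniteDimensional ℂ E]
  [NormedAddCommGroup G] [NormedSpace ℂ G] [FiniteDimensional ℂ G]

theorem finrank_le_dimH_fiber_add_finrank {f : E → G} {x₀ : E} (hf : AnalyticAt ℂ f x₀)
    {W : Set E} (hW : W ∈ 𝓝 x₀) :
    (finrank ℝ E : ℝ≥0∞) ≤ dimH (f ⁻¹' {f x₀} ∩ W) + finrank ℝ G := by
  by_contra! hlt
  let Z := f ⁻¹' {f x₀} ∩ W
  let m := finrank ℂ E - finrank ℂ G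
  have hm : finrank ℂ E = finrank ℂ (G × (Fin m → ℂ)) := by
    have : finrank ℝ G < finrank ℝ E := by exact_mod_cast le_add_self.trans_lt hlt
    rw [finrank_real_of_complex, finrank_real_of_complex] at this
    rw [finrank_prod, finrank_fin_fun]
    omega
  have hsub : dimH ((· - x₀) '' Z) = dimH Z := (IsometryEquiv.subRight x₀).isometry.dimH_image Z
  have hZ : dimH ((· - x₀) '' Z) < dimH (univ : Set (Fin m → ℂ)) := by
    have hfin : finrank ℝ E = finrank ℝ (Fin m → ℂ) + finrank ℝ G := by
      rw [finrank_real_of_complex, hm, finrank_prod, finrank_real_of_complex,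
        finrank_real_of_complex]
      ring
    rw [hfin, Nat.cast_add] at hlt
    rw [hsub, Real.dimH_univ_eq_finrank]
    exact lt_of_add_lt_add_right hlt
  obtain ⟨T, hT⟩ := exists_continuousLinearMap_forall_eq_zero (𝕜 := ℂ) hZ
  have hiso : ∀ᶠ x in 𝓝[≠] x₀, (f x, T x) ≠ (f x₀, T x₀) := by
    filter_upwards [mem_nhdsWithin_of_mem_nhds hW, self_mem_nhdsWithin] with x hxW hne heq
    obtain ⟨hfx, hTx⟩ := Prod.mk.inj heq
    exact hne (sub_eq_zero.1 (hT _ ⟨x, ⟨hfx, hxW⟩, rfl⟩ (by rw [map_sub, hTx, sub_self])))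
  have himage : T '' Z ∈ 𝓝 (T x₀) := by
    have hopen := nhds_le_map_nhds_of_isolated hm (hf.prod (T.analyticAt x₀)) hiso
      (image_mem_map hW)
    filter_upwards [(Continuous.prodMk_right (f x₀)).tendsto (T x₀) hopen] with c hc
    obtain ⟨x, hxW, hx⟩ := hc
    obtain ⟨hfx, hTx⟩ := Prod.mk.inj hx
    exact ⟨x, ⟨hfx, hxW⟩, hTx⟩
  refine (hsub ▸ hZ).not_ge ?_
  rw [Real.dimH_univ_eq_finrank, ← Real.dimH_of_mem_nhds himage]
  exact T.lipschitz.dimH_image_le Z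

end Dimension

theorem eq_zero_of_wedge_eq_zero {κ R : Type*} [LinearOrder κ] [Ring R] [NoZeroDivisors R]
    {p : ℕ} {b : κ → R} {A : Finset κ → R}
    (hwedge : ∀ J : Finset κ, J.card = p + 1 →
      ∑ i ∈ J, (-1 : R) ^ (J.filter (· < i)).card * (b i * A (J.erase i)) = 0)
    {I : Finset κ} (hI : I.card = p) (hA : A I ≠ 0) (hb : ∀ i ∈ I, b i = 0) (j : κ) : b j = 0 := by
  by_cases hj : j ∈ I
  · exact hb j hj
  have hJ := hwedge (insert j I) (by rw [Finset.card_insert_of_notMem hj, hI])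
  rw [Finset.sum_insert hj, Finset.erase_insert hj,
    Finset.sum_eq_zero fun i hi => by rw [hb i hi, zero_mul, mul_zero], add_zero] at hJ
  rw [(isUnit_one.neg.pow _).mul_right_eq_zero] at hJ
  exact (mul_eq_zero.1 hJ).resolve_right hA

theorem stmt_2_general {κ : Type*} [Fintype κ] [LinearOrder κ] {p : ℕ} {U : Set (κ → ℂ)}
    (hU : IsOpen U) {b : κ → (κ → ℂ) → ℂ} {A : Finset κ → (κ → ℂ) → ℂ}
    (hb : ∀ i, AnalyticOnNhd ℂ (b i) U)
    (hA : ∀ I : Finset κ, I.card = p → ContinuousOn (A I) U)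
    (hwedge : ∀ J : Finset κ, J.card = p + 1 → ∀ x ∈ U,
      ∑ i ∈ J, (-1 : ℂ) ^ (J.filter (· < i)).card * (b i x * A (J.erase i) x) = 0) :
    ∀ x ∈ ({x ∈ U | ∀ i, b i x = 0} \ {x ∈ U | ∀ I : Finset κ, I.card = p → A I x = 0}),
      ∀ W ∈ 𝓝 x,
        ENNReal.ofReal (2 * (Fintype.card κ : ℝ) - 2 * p) ≤
          dimH (({x ∈ U | ∀ i, b i x = 0} \
            {x ∈ U | ∀ I : Finset κ, I.card = p → A I x = 0}) ∩ W) := by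
  rintro x ⟨⟨hxU, hbx⟩, hAx⟩ W hW
  obtain ⟨I, hI, hAI⟩ : ∃ I : Finset κ, I.card = p ∧ A I x ≠ 0 := by
    by_contra! h
    exact hAx ⟨hxU, h⟩
  let f : (κ → ℂ) → I → ℂ := fun y i => b i y
  have hf : AnalyticAt ℂ f x := analyticAt_pi_iff.2 fun i => hb i x hxU
  have hnhds : ∀ᶠ y in 𝓝 x, y ∈ U ∧ A I y ≠ 0 ∧ y ∈ W :=
    (hU.eventually_mem hxU).and
      ((((hA I hI).continuousAt (hU.mem_nhds hxU)).eventually_ne hAI).and hW)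
  have hdim := finrank_le_dimH_fiber_add_finrank hf hnhds
  rw [finrank_real_of_complex, finrank_real_of_complex, finrank_fintype_fun_eq_card,
    finrank_fintype_fun_eq_card, Fintype.card_coe, hI] at hdim
  calc ENNReal.ofReal (2 * (Fintype.card κ : ℝ) - 2 * p)
      = ((2 * Fintype.card κ : ℕ) : ℝ≥0∞) - ((2 * p : ℕ) : ℝ≥0∞) := by
        rw [ENNReal.ofReal_sub _ (by positivity), ← ENNReal.ofReal_natCast,
          ← ENNReal.ofReal_natCast]
        push_cast
        rfl
    _ ≤ dimH (f ⁻¹' {f x} ∩ {y | y ∈ U ∧ A I y ≠ 0 ∧ y ∈ W}) := tsub_le_iff_right.2 hdim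
    _ ≤ _ := by
        refine dimH_mono fun y ⟨hfy, hyU, hAy, hyW⟩ => ⟨⟨⟨hyU, ?_⟩, fun h => hAy (h.2 I hI)⟩, hyW⟩
        exact eq_zero_of_wedge_eq_zero (b := (b · y)) (A := (A · y)) (hwedge · · y hyU) hI hAy
          fun i hi => (congrFun hfy ⟨i, hi⟩).trans (hbx i)

/-- Proposition 2.3: let `U ⊆ ℂ^ℓ` be a connected open set, `ω = Σ_i b_i dx_i`
a holomorphic 1-form and `ψ = Σ_I A_I dx_I` a holomorphic `p`-form on `U` with
`ω ∧ ψ = 0` (expressed coefficientwise).  Then every irreducible component of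
`V(ω) \ V(ψ)` has codimension at most `p` in `ℂ^ℓ`: every point of that set has
local (Hausdorff) dimension at least `2(ℓ−p)` in every neighborhood. -/
theorem stmt_2 (ℓ p : ℕ) (U : Set (Fin ℓ → ℂ)) (hUo : IsOpen U) (hUc : IsConnected U)
    (b : Fin ℓ → (Fin ℓ → ℂ) → ℂ) (A : Finset (Fin ℓ) → (Fin ℓ → ℂ) → ℂ)
    (hb : ∀ i, AnalyticOnNhd ℂ (b i) U)
    (hA : ∀ I : Finset (Fin ℓ), I.card = p → AnalyticOnNhd ℂ (A I) U)
    -- the coefficientwise form of `ω ∧ ψ = 0`: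
    (hwedge : ∀ J : Finset (Fin ℓ), J.card = p + 1 → ∀ x ∈ U,
      ∑ i ∈ J, (-1 : ℂ) ^ (J.filter (· < i)).card * (b i x * A (J.erase i) x) = 0) :
    ∀ x ∈ ({x ∈ U | ∀ i, b i x = 0} \
        {x ∈ U | ∀ I : Finset (Fin ℓ), I.card = p → A I x = 0}),
      ∀ W ∈ nhds x,
        ENNReal.ofReal (2 * (ℓ : ℝ) - 2 * p) ≤
          dimH (({x ∈ U | ∀ i, b i x = 0} \
            {x ∈ U | ∀ I : Finset (Fin ℓ), I.card = p → A I x = 0}) ∩ W) := by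
  simpa using stmt_2_general hUo hb (fun I hI => (hA I hI).continuousOn) hwedge
end

section
/- Let ω ∈ Ω^1(U) and suppose the intersection of V(ψ) over all p-forms ψ with ω ∧ ψ = 0 is empty. Then every irreducible component of V(ω) has codimension at most p. -/
/-!
Let `ψ` be a `p`-form with `ω ∧ ψ = 0` and `ψ x ≠ 0`, say `A I x ≠ 0`. Where the `p` functions
`b i`, `i ∈ I`, vanish, the coefficient of `ω ∧ ψ` at `I ∪ {j}` reduces to `± b j * A I`, so near
`x` these `p` functions already cut out `V(ω)`.

It remains to bound from below the dimension of the zero set `Z` of `p` analytic functions `f` on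
`ℂ^ℓ`. If `Z` had Hausdorff dimension less than `2(ℓ - p)` near a zero, say `0`, a generic linear
map `L : ℂ^ℓ → ℂ^(ℓ - p)` would vanish on `Z` only at `0`. The map `(f, L) : ℂ^ℓ → ℂ^ℓ` would then
have an isolated zero and hence cover a neighbourhood of `0`; so `L` would map `Z` onto a
neighbourhood of `0` in `ℂ^(ℓ - p)`, which has dimension `2(ℓ - p)`.

That an isolated zero of an analytic map forces it to cover a neighbourhood is obtained by
approximating the map uniformly by polynomial maps and adding `ε z_i ^ N`, with `N` large, to their
components: these are then finite over the polynomial ring, and finite polynomial maps are open.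
-/

section FinitePolynomialMaps

open MvPolynomial

variable {ι σ K : Type*}

/-- The polynomial map `K^ι → K^σ` with components `P`. -/
noncomputable def polynomialMap [CommSemiring K] (P : σ → MvPolynomial ι K) (z : ι → K) : σ → K :=
  fun i => eval z (P i)

theorem continuous_polynomialMap [CommSemiring K] [TopologicalSpace K] [IsTopologicalSemiring K]
    (P : σ → MvPolynomial ι K) : Continuous (polynomialMap P) :=
  continuous_pi fun i => MvPolynomial.continuous_eval (P i)

theorem monomial_mem_span_monomial_le {R : Type*} [CommRing R] {A : Subalgebra R (MvPolynomial ι R)}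
    {N : ι →₀ ℕ} (h : ∀ i, ∃ f ∈ A, (X i ^ N i - f).totalDegree < N i) (s : ι →₀ ℕ) :
    monomial s 1 ∈ Submodule.span A ((monomial · (1 : R)) '' Set.Iic N) := by
  induction hd : s.degree using Nat.strong_induction_on generalizing s with
  | _ d ih =>
    by_cases hs : s ≤ N
    · exact Submodule.subset_span ⟨s, hs, rfl⟩
    obtain ⟨i, hi⟩ : ∃ i, N i < s i := by simpa [Finsupp.le_def] using hs
    obtain ⟨t, rfl⟩ := exists_add_of_le (Finsupp.single_le_iff.2 hi.le)
    obtain ⟨f, hfA, hf⟩ := h i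
    have hdeg : N i + t.degree = d := by simpa using hd
    have hlower : monomial t 1 * (X i ^ N i - f) ∈
        Submodule.span A ((monomial · (1 : R)) '' Set.Iic N) := by
      have hq : (monomial t 1 * (X i ^ N i - f)).totalDegree < d := by
        have hmul := totalDegree_mul (monomial t (1 : R)) (X i ^ N i - f)
        have hmon : (monomial t (1 : R)).totalDegree ≤ t.degree := totalDegree_monomial_le t 1
        omega
      rw [as_sum (monomial t 1 * (X i ^ N i - f))]
      refine Submodule.sum_mem _ fun u hu => ?_
      have := Submodule.smul_mem _ (algebraMap R A (coeff u (monomial t 1 * (X i ^ N i - f))))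
        (ih u.degree ((le_totalDegree hu).trans_lt hq) u rfl)
      simpa only [algebraMap_smul, smul_monomial, smul_eq_mul, mul_one] using this
    have hmain := Submodule.smul_mem _ (⟨f, hfA⟩ : A) (ih t.degree (by omega) t rfl)
    have hsplit : monomial (Finsupp.single i (N i) + t) (1 : R) =
        f * monomial t 1 + monomial t 1 * (X i ^ N i - f) := by
      rw [X_pow_eq_monomial, mul_sub, monomial_mul, mul_one, add_comm t]
      ring
    exact hsplit ▸ Submodule.add_mem _ hmain hlower

theorem finite_mvPolynomial_of_totalDegree_X_pow_sub_lt {R : Type*} [Finite ι] [CommRing R]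
    {A : Subalgebra R (MvPolynomial ι R)} {N : ι → ℕ}
    (h : ∀ i, ∃ f ∈ A, (X i ^ N i - f).totalDegree < N i) :
    Module.Finite A (MvPolynomial ι R) := by
  classical
  have hfin := (Set.finite_Iic (Finsupp.equivFunOnFinite.symm N)).image (monomial · (1 : R))
  refine Module.Finite.of_fg_top ⟨hfin.toFinset, ?_⟩
  rw [Set.Finite.coe_toFinset, eq_top_iff]
  rintro f -
  rw [f.as_sum]
  refine Submodule.sum_mem _ fun s _ => ?_
  have hs := monomial_mem_span_monomial_le (N := Finsupp.equivFunOnFinite.symm N) h s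
  simpa only [algebraMap_smul, smul_monomial, smul_eq_mul, mul_one] using
    Submodule.smul_mem _ (algebraMap R A (coeff s f)) hs

theorem isIntegral_aeval_of_eq_C_mul_X_pow_add [Field K] [Finite ι] (e : σ ≃ ι)
    {P R : σ → MvPolynomial ι K} {N : ℕ} {ε : K} (hε : ε ≠ 0) (hR : ∀ i, (R i).totalDegree < N)
    (hP : ∀ i, P i = C ε * X (e i) ^ N + R i) :
    (aeval P : MvPolynomial σ K →ₐ[K] _).IsIntegral := by
  have hfin : Module.Finite (aeval P : MvPolynomial σ K →ₐ[K] _).range (MvPolynomial ι K) := by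
    refine finite_mvPolynomial_of_totalDegree_X_pow_sub_lt (N := fun _ => N) fun j => ?_
    obtain ⟨i, rfl⟩ := e.surjective j
    refine ⟨C ε⁻¹ * P i, ⟨C ε⁻¹ * X i, by simp [algebraMap_eq]⟩, ?_⟩
    have hinv : (C ε⁻¹ * C ε : MvPolynomial ι K) = 1 := by
      rw [← C_mul, inv_mul_cancel₀ hε, C_1]
    have hlower : X (e i) ^ N - C ε⁻¹ * P i = C (-ε⁻¹) * R i := by
      rw [hP, C_neg]
      linear_combination (-X (e i) ^ N) * hinv
    rw [hlower, ← smul_eq_C_mul]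
    exact (totalDegree_smul_le _ _).trans_lt (hR i)
  exact RingHom.IsIntegral.trans _ _
    (RingHom.isIntegral_of_surjective _
      (aeval P : MvPolynomial σ K →ₐ[K] _).rangeRestrict_surjective)
    (algebraMap_isIntegral_iff.2 inferInstance)

/-- One polynomial per variable suffices for independence once everything is integral over them:
the transcendence degree is then attained. -/
theorem algebraicIndependent_of_isIntegral_aeval [Field K] [Finite ι] (e : σ ≃ ι)
    {P : σ → MvPolynomial ι K} (hP : (aeval P : MvPolynomial σ K →ₐ[K] _).IsIntegral) :
    AlgebraicIndependent K P := by
  have := Finite.of_equiv ι e.symm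
  have : Algebra.IsIntegral (Algebra.adjoin K (Set.range P)) (MvPolynomial ι K) := by
    rw [Algebra.adjoin_range_eq_range_aeval]
    refine algebraMap_isIntegral_iff.1 (RingHom.IsIntegral.tower_top
      (aeval P : MvPolynomial σ K →ₐ[K] _).rangeRestrict.toRingHom _ hP)
  refine (Algebra.IsAlgebraic.isTranscendenceBasis_of_lift_le_trdeg_of_finite K P ?_).1
  rw [MvPolynomial.trdeg_of_isDomain, ← Nat.cast_card, ← Nat.cast_card, Nat.card_congr e]
  simp only [Cardinal.lift_natCast, le_refl]

theorem exists_eval_eq_of_isIntegral {A : Type*} [Finite ι] [Field K] [IsAlgClosed K] [CommRing A]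
    [Algebra K A] {φ : A →ₐ[K] MvPolynomial ι K} (hφ : φ.IsIntegral) {e : A →ₐ[K] K}
    (he : RingHom.ker φ ≤ RingHom.ker e) : ∃ z, ∀ a, eval z (φ a) = e a := by
  let := φ.toRingHom.toAlgebra
  have : Algebra.IsIntegral A (MvPolynomial ι K) := algebraMap_isIntegral_iff.1 hφ
  have hmax : (RingHom.ker e).IsMaximal :=
    RingHom.ker_isMaximal_of_surjective e fun c => ⟨algebraMap K A c, e.commutes c⟩
  obtain ⟨Q, hQ, hQe⟩ := Ideal.exists_ideal_over_maximal_of_isIntegral (S := MvPolynomial ι K) _ he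
  obtain ⟨z, rfl⟩ := isMaximal_iff_eq_vanishingIdeal_singleton.1 hQ
  refine ⟨z, fun a => ?_⟩
  have ha : a - algebraMap K A (e a) ∈ RingHom.ker e := by simp [RingHom.mem_ker]
  rw [← hQe, Ideal.mem_comap, mem_vanishingIdeal_singleton_iff] at ha
  have hφa : eval z (φ (a - algebraMap K A (e a))) = 0 := ha
  rwa [map_sub, φ.commutes, map_sub, algebraMap_eq, eval_C, sub_eq_zero] at hφa

/-- The fibres of the polynomial map `P` are read off from the minimal polynomial `q` of `g` over
the subring `K[P]`, which is normal; hence the converse direction, the lying over theorem. -/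
theorem exists_monic_isRoot_map_eval_iff [Finite ι] [Field K] [IsAlgClosed K]
    {P : σ → MvPolynomial ι K} (hP : (aeval P : MvPolynomial σ K →ₐ[K] _).IsIntegral)
    (hind : AlgebraicIndependent K P) (g : MvPolynomial ι K) :
    ∃ q : Polynomial (MvPolynomial σ K), q.Monic ∧ ∀ w τ,
      (q.map (eval w)).IsRoot τ ↔ ∃ z, polynomialMap P z = w ∧ eval z g = τ := by
  let := (aeval P : MvPolynomial σ K →ₐ[K] MvPolynomial ι K).toRingHom.toAlgebra
  have : FaithfulSMul (MvPolynomial σ K) (MvPolynomial ι K) :=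
    (faithfulSMul_iff_algebraMap_injective _ _).2 hind
  have halg (s : MvPolynomial σ K) : algebraMap _ (MvPolynomial ι K) s = aeval P s := rfl
  have hg : IsIntegral (MvPolynomial σ K) g := hP g
  refine ⟨minpoly (MvPolynomial σ K) g, minpoly.monic hg, fun w τ => ⟨fun h => ?_, ?_⟩⟩
  · let φ := Polynomial.eval₂AlgHom (aeval P : MvPolynomial σ K →ₐ[K] MvPolynomial ι K) g
      fun _ => Commute.all _ _
    let e := Polynomial.eval₂AlgHom (aeval w : MvPolynomial σ K →ₐ[K] K) τ fun _ => Commute.all _ _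
    have hφC : φ.toRingHom.comp Polynomial.C = (aeval P).toRingHom :=
      RingHom.ext fun s => Polynomial.eval₂_C _ _
    have hφ : φ.IsIntegral := RingHom.IsIntegral.tower_top Polynomial.C _ (hφC ▸ hP)
    have he : RingHom.ker φ ≤ RingHom.ker e := by
      intro r hr
      obtain ⟨r, rfl⟩ := minpoly.isIntegrallyClosed_dvd hg (p := r) hr
      rw [Polynomial.IsRoot, Polynomial.eval_map] at h
      rw [RingHom.mem_ker, map_mul]
      exact mul_eq_zero_of_left h _
    obtain ⟨z, hz⟩ := exists_eval_eq_of_isIntegral hφ he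
    refine ⟨z, ?_, ?_⟩
    · funext i
      simpa [φ, e, polynomialMap] using hz (Polynomial.C (X i))
    · simpa [φ, e] using hz Polynomial.X
  · rintro ⟨z, rfl, rfl⟩
    have heval : eval (polynomialMap P z) =
        (eval z).comp (algebraMap (MvPolynomial σ K) (MvPolynomial ι K)) := by
      refine ringHom_ext (fun c => ?_) fun i => ?_ <;>
        simp [halg, polynomialMap]
    rw [heval, Polynomial.IsRoot, Polynomial.eval_map, ← Polynomial.hom_eval₂,
      ← Polynomial.aeval_def, minpoly.aeval, map_zero]

end FinitePolynomialMaps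

section OpenPolynomialMaps

open MvPolynomial Topology

variable {ι σ : Type*}

theorem eventually_exists_isRoot_norm_sub_lt {q : Polynomial (MvPolynomial σ ℂ)} (hq : q.Monic)
    {w₀ : σ → ℂ} {τ₀ : ℂ} (h₀ : (q.map (eval w₀)).IsRoot τ₀) {η : ℝ} (hη : 0 < η) :
    ∀ᶠ w in 𝓝 w₀, ∃ τ, (q.map (eval w)).IsRoot τ ∧ ‖τ₀ - τ‖ < η := by
  have hdeg : q.natDegree ≠ 0 := by
    rintro h
    simp [hq.natDegree_eq_zero.1 h] at h₀
  set B : ℝ := max ‖τ₀‖ 1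
  have hB : 0 < B := zero_lt_one.trans_le (le_max_right _ _)
  obtain ⟨ε, hε, hεη⟩ :
      ∃ ε > 0, ((q.natDegree + 1) * ε) ^ (q.natDegree : ℝ)⁻¹ * B < η := by
    refine ⟨(η / 2 / B) ^ q.natDegree / (q.natDegree + 1), by positivity, ?_⟩
    rw [mul_div_cancel₀ _ (by positivity), Real.pow_rpow_inv_natCast (by positivity) hdeg,
      div_mul_cancel₀ _ hB.ne']
    exact half_lt_self hη
  have hcoeff : ∀ᶠ w in 𝓝 w₀, ∀ i ∈ q.support, ‖eval w (q.coeff i) - eval w₀ (q.coeff i)‖ < ε := by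
    refine (Filter.eventually_all_finset _).2 fun i _ => ?_
    have hcont : Continuous fun w => ‖eval w (q.coeff i) - eval w₀ (q.coeff i)‖ :=
      ((MvPolynomial.continuous_eval (q.coeff i)).sub continuous_const).norm
    exact hcont.continuousAt.eventually_lt_const (by simpa using hε)
  filter_upwards [hcoeff] with w hw
  obtain ⟨τ, hτ, hlt⟩ := Polynomial.exists_roots_norm_sub_lt_of_norm_coeff_sub_lt hε h₀
    (hq.map (eval w₀)) (hq.map (eval w)) (by simp only [hq.natDegree_map])
    (fun i => by
      by_cases hi : i ∈ q.support
      · simpa only [Polynomial.coeff_map] using hw i hi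
      · simpa [Polynomial.notMem_support_iff.1 hi] using hε) (IsAlgClosed.splits _)
  rw [hq.natDegree_map] at hlt
  exact ⟨τ, Polynomial.isRoot_of_mem_roots hτ, hlt.trans hεη⟩

theorem continuous_cauchyBound_map_eval {q : Polynomial (MvPolynomial σ ℂ)} (hq : q.Monic) :
    Continuous fun w => (q.map (eval w)).cauchyBound := by
  simp only [Polynomial.cauchyBound, hq.natDegree_map, (hq.map (eval _)).leadingCoeff, nnnorm_one,
    div_one, Polynomial.coeff_map]
  exact (Continuous.finset_sup_apply fun k _ =>
    (MvPolynomial.continuous_eval (q.coeff k)).nnnorm).add continuous_const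

theorem isProperMap_polynomialMap [Finite ι] [Finite σ] {P : σ → MvPolynomial ι ℂ}
    (hP : (aeval P : MvPolynomial σ ℂ →ₐ[ℂ] _).IsIntegral) (hind : AlgebraicIndependent ℂ P) :
    IsProperMap (polynomialMap P) := by
  have := Fintype.ofFinite ι
  have := Fintype.ofFinite σ
  choose q hqm hq using exists_monic_isRoot_map_eval_iff hP hind
  refine isProperMap_iff_isCompact_preimage.2 ⟨continuous_polynomialMap P, fun T hT => ?_⟩
  have hbdd (i : ι) : ∃ M, ∀ w ∈ T, ((q (X i)).map (eval w)).cauchyBound ≤ M := by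
    obtain ⟨M, hM⟩ := (hT.image (continuous_cauchyBound_map_eval (hqm (X i)))).bddAbove
    exact ⟨M, fun w hw => hM ⟨w, hw, rfl⟩⟩
  choose M hM using hbdd
  refine (isCompact_univ_pi fun i => isCompact_closedBall (0 : ℂ) (M i)).of_isClosed_subset
    (hT.isClosed.preimage (continuous_polynomialMap P)) fun z hz i _ => ?_
  have hroot := (hq (X i) _ _).2 ⟨z, rfl, eval_X i⟩
  rw [mem_closedBall_zero_iff]
  exact_mod_cast (hroot.norm_lt_cauchyBound ((hqm _).map _).ne_zero).le.trans (hM i _ hz)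

theorem finite_preimage_polynomialMap_singleton [Finite ι] {P : σ → MvPolynomial ι ℂ}
    (hP : (aeval P : MvPolynomial σ ℂ →ₐ[ℂ] _).IsIntegral) (hind : AlgebraicIndependent ℂ P)
    (w : σ → ℂ) : (polynomialMap P ⁻¹' {w}).Finite := by
  choose q hqm hq using exists_monic_isRoot_map_eval_iff hP hind
  refine (Set.Finite.pi' fun i => Polynomial.finite_setOfPred_isRoot
    ((hqm (X i)).map (eval w)).ne_zero).subset fun z hz i => ?_
  exact (hq _ _ _).2 ⟨z, hz, eval_X i⟩

theorem exists_eval_eq_zero_forall_eval_ne_zero {K : Type*} [Field K] {S : Set (ι → K)}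
    (hS : S.Finite) (z₀ : ι → K) :
    ∃ g : MvPolynomial ι K, eval z₀ g = 0 ∧ ∀ z ∈ S, z ≠ z₀ → eval z g ≠ 0 := by
  have hsep (z : ι → K) : ∃ L : MvPolynomial ι K, eval z₀ L = 1 ∧ (z ≠ z₀ → eval z L = 0) := by
    by_cases hz : z = z₀
    · exact ⟨1, map_one _, fun h => (h hz).elim⟩
    obtain ⟨j, hj⟩ := Function.ne_iff.1 hz
    refine ⟨1 - C (z j - z₀ j)⁻¹ * (X j - C (z₀ j)), by simp, fun _ => ?_⟩
    simp [inv_mul_cancel₀ (sub_ne_zero.2 hj)]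
  choose L hL₀ hL using hsep
  refine ⟨1 - ∏ z ∈ hS.toFinset, L z, by simp [hL₀, map_prod], fun z hz hne => ?_⟩
  rw [map_sub, map_one, map_prod, Finset.prod_eq_zero (hS.mem_toFinset.2 hz) (hL z hne), sub_zero]
  exact one_ne_zero

/-- Separate `z₀` from the rest of its fibre by a polynomial `g`. The map `(P, g)` is closed, so
points outside a neighbourhood of `z₀` stay away from `(P z₀, 0)`, whereas continuity of roots
gives, over each `w` near `P z₀`, a point where `g` is small. -/
theorem isOpenMap_polynomialMap [Finite ι] [Finite σ] {P : σ → MvPolynomial ι ℂ}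
    (hP : (aeval P : MvPolynomial σ ℂ →ₐ[ℂ] _).IsIntegral) (hind : AlgebraicIndependent ℂ P) :
    IsOpenMap (polynomialMap P) := by
  refine isOpenMap_iff_nhds_le.2 fun z₀ s hs => ?_
  obtain ⟨O, hOs, hO, hzO⟩ := mem_nhds_iff.1 (Filter.mem_map.1 hs)
  obtain ⟨g, hg₀, hg⟩ := exists_eval_eq_zero_forall_eval_ne_zero
    (finite_preimage_polynomialMap_singleton hP hind (polynomialMap P z₀)) z₀
  obtain ⟨q, hqm, hq⟩ := exists_monic_isRoot_map_eval_iff hP hind g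
  have hproper : IsProperMap fun z => (polynomialMap P z, eval z g) :=
    isProperMap_of_comp_of_t2 ((continuous_polynomialMap P).prodMk (MvPolynomial.continuous_eval g))
      continuous_fst (isProperMap_polynomialMap hP hind)
  have hclosed := hproper.isClosedMap _ hO.isClosed_compl
  have hnot : (polynomialMap P z₀, (0 : ℂ)) ∉ (fun z => (polynomialMap P z, eval z g)) '' Oᶜ := by
    rintro ⟨z, hzO', hz⟩
    obtain ⟨hPz, hgz⟩ := Prod.mk.inj hz
    exact hg z hPz (fun h => hzO' (h ▸ hzO)) hgz
  obtain ⟨N, hN, B, hB, hNB⟩ := mem_nhds_prod_iff.1 (hclosed.isOpen_compl.mem_nhds hnot)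
  obtain ⟨η, hη, hηB⟩ := Metric.mem_nhds_iff.1 hB
  have hroot : (q.map (eval (polynomialMap P z₀))).IsRoot 0 := (hq _ _).2 ⟨z₀, rfl, hg₀⟩
  filter_upwards [eventually_exists_isRoot_norm_sub_lt hqm hroot hη, hN] with w ⟨τ, hτ, hτη⟩ hw
  obtain ⟨z, rfl, rfl⟩ := (hq _ _).1 hτ
  have hgB : eval z g ∈ B := hηB (by simpa using hτη)
  exact hOs (not_not.1 fun hz => hNB (Set.mk_mem_prod hw hgB) ⟨z, hz, rfl⟩)

theorem exists_isOpenMap_polynomialMap_norm_sub_le [Fintype ι] [Fintype σ] (e : σ ≃ ι)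
    (R : σ → MvPolynomial ι ℂ) {r η : ℝ} (hr : 0 < r) (hη : 0 < η) :
    ∃ P : σ → MvPolynomial ι ℂ, IsOpenMap (polynomialMap P) ∧
      ∀ z ∈ Metric.closedBall 0 r, ‖polynomialMap P z - polynomialMap R z‖ ≤ η := by
  set N := ∑ i, (R i).totalDegree + 1
  have hRN (i : σ) : (R i).totalDegree < N := Nat.lt_succ_of_le
    (Finset.single_le_sum (f := fun i => (R i).totalDegree) (fun _ _ => Nat.zero_le _)
      (Finset.mem_univ i))
  have hε : ((η / r ^ N : ℝ) : ℂ) ≠ 0 := Complex.ofReal_ne_zero.2 (by positivity)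
  let P : σ → MvPolynomial ι ℂ := fun i => C ((η / r ^ N : ℝ) : ℂ) * X (e i) ^ N + R i
  have hint : (aeval P : MvPolynomial σ ℂ →ₐ[ℂ] _).IsIntegral :=
    isIntegral_aeval_of_eq_C_mul_X_pow_add e hε hRN fun i => rfl
  refine ⟨P, isOpenMap_polynomialMap hint (algebraicIndependent_of_isIntegral_aeval e hint),
    fun z hz => (pi_norm_le_iff_of_nonneg hη.le).2 fun i => ?_⟩
  calc ‖(polynomialMap P z - polynomialMap R z) i‖ = η / r ^ N * ‖z (e i)‖ ^ N := by
        simp [polynomialMap, P, abs_of_pos hr, abs_of_pos hη]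
    _ ≤ η / r ^ N * r ^ N := by
        gcongr
        exact (norm_le_pi_norm z _).trans (mem_closedBall_zero_iff.1 hz)
    _ = η := div_mul_cancel₀ _ (by positivity)

end OpenPolynomialMaps

section Covering

open Metric

variable {E F : Type*} [PseudoMetricSpace E] [ProperSpace E] [NormedAddCommGroup F]
  [NormedSpace ℝ F] {z₀ : E} {r c : ℝ}

theorem ball_subset_image_ball_of_isOpenMap {f : E → F} (hf : Continuous f) (hfo : IsOpenMap f)
    (hr : 0 < r) (h₀ : ‖f z₀‖ < c) (hs : ∀ z ∈ sphere z₀ r, c ≤ ‖f z‖) :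
    ball 0 c ⊆ f '' ball z₀ r := by
  refine (convex_ball (0 : F) c).isPreconnected.subset_of_closure_inter_subset
    (hfo _ isOpen_ball) ⟨f z₀, mem_ball_zero_iff.2 h₀, z₀, mem_ball_self hr, rfl⟩ ?_
  rintro w ⟨hw, hwc⟩
  have hclosed : IsClosed (f '' closedBall z₀ r) := ((isCompact_closedBall z₀ r).image hf).isClosed
  obtain ⟨z, hz, rfl⟩ := closure_minimal (Set.image_mono ball_subset_closedBall) hclosed hw
  exact ⟨z, lt_of_le_of_ne hz fun h => (hs z h).not_gt (mem_ball_zero_iff.1 hwc), rfl⟩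

theorem ball_subset_image_closedBall_of_forall_exists_isOpenMap {h : E → F} (hr : 0 < r)
    (hh : ContinuousOn h (closedBall z₀ r)) (h₀ : h z₀ = 0) (hs : ∀ z ∈ sphere z₀ r, c ≤ ‖h z‖)
    (happrox : ∀ η > 0, ∃ f : E → F, Continuous f ∧ IsOpenMap f ∧
      ∀ z ∈ closedBall z₀ r, ‖f z - h z‖ ≤ η) :
    ball 0 c ⊆ h '' closedBall z₀ r := by
  intro y hy
  have hyc : 0 < c - ‖y‖ := sub_pos.2 (mem_ball_zero_iff.1 hy)
  have hclosed : IsClosed (h '' closedBall z₀ r) :=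
    ((isCompact_closedBall z₀ r).image_of_continuousOn hh).isClosed
  rw [← hclosed.closure_eq, Metric.mem_closure_iff]
  intro ε hε
  obtain ⟨η, hη, hηy, hηε⟩ : ∃ η > 0, η < (c - ‖y‖) / 2 ∧ η < ε :=
    (exists_between (lt_min (half_pos hyc) hε)).imp fun η h => ⟨h.1, lt_min_iff.1 h.2⟩
  obtain ⟨f, hf, hfo, hfh⟩ := happrox η hη
  have hf₀ : ‖f z₀‖ < c - η := by
    have := hfh z₀ (mem_closedBall_self hr.le)
    rw [h₀, sub_zero] at this
    linarith [norm_nonneg y]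
  have hfs : ∀ z ∈ sphere z₀ r, c - η ≤ ‖f z‖ := fun z hz => by
    linarith [hs z hz, hfh z (sphere_subset_closedBall hz), norm_sub_norm_le (h z) (f z),
      norm_sub_rev (h z) (f z)]
  obtain ⟨z, hz, rfl⟩ := ball_subset_image_ball_of_isOpenMap hf hfo hr hf₀ hfs
    (mem_ball_zero_iff.2 (by linarith : ‖y‖ < c - η))
  have hz := ball_subset_closedBall hz
  exact ⟨h z, ⟨z, hz, rfl⟩, (dist_eq_norm (f z) (h z)).trans_lt ((hfh z hz).trans_lt hηε)⟩

end Covering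

section AnalyticMaps

open Topology

variable {ι σ : Type*}

theorem exists_mvPolynomial_eval_eq_diag [Finite ι] {K : Type*} [CommSemiring K] {n : ℕ}
    (f : MultilinearMap K (fun _ : Fin n => ι → K) K) :
    ∃ P : MvPolynomial ι K, ∀ z, MvPolynomial.eval z P = f fun _ => z := by
  classical
  have := Fintype.ofFinite ι
  refine ⟨∑ s : Fin n → ι, (∏ k, MvPolynomial.X (s k)) *
    MvPolynomial.C (f fun k => Pi.single (s k) 1), fun z => ?_⟩
  conv_rhs => rw [pi_eq_sum_univ' z]
  rw [f.map_sum, map_sum]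
  refine Finset.sum_congr rfl fun s _ => ?_
  rw [f.map_smul_univ (fun k => z (s k)) fun k => Pi.single (s k) 1]
  simp [map_prod]

variable [Fintype ι] [Fintype σ]

theorem eventually_forall_exists_norm_polynomialMap_sub_le {f : (ι → ℂ) → σ → ℂ}
    (hf : AnalyticAt ℂ f 0) :
    ∀ᶠ r in 𝓝 (0 : ℝ), ∀ η > 0, ∃ P : σ → MvPolynomial ι ℂ,
      ∀ z ∈ Metric.closedBall 0 r, ‖polynomialMap P z - f z‖ ≤ η := by
  obtain ⟨p, R, hp⟩ := hf
  obtain ⟨ρ, hρ, hρR⟩ := ENNReal.lt_iff_exists_nnreal_btwn.1 hp.r_pos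
  filter_upwards [eventually_lt_nhds (NNReal.coe_pos.2 (ENNReal.coe_pos.1 hρ))] with r hr η hη
  obtain ⟨n, hn⟩ := (Metric.tendstoUniformlyOn_iff.1 (hp.tendstoUniformlyOn hρR) η hη).exists
  choose Q hQ using fun k i => exists_mvPolynomial_eval_eq_diag
    ((ContinuousLinearMap.proj (R := ℂ) (φ := fun _ : σ => ℂ) i).compContinuousMultilinearMap
      (p k)).toMultilinearMap
  refine ⟨fun i => ∑ k ∈ Finset.range n, Q k i, fun z hz => ?_⟩
  have hsum : polynomialMap (fun i => ∑ k ∈ Finset.range n, Q k i) z = p.partialSum n z := by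
    funext i
    simp [polynomialMap, FormalMultilinearSeries.partialSum, hQ]
  have hzn := hn z (Metric.closedBall_subset_ball hr hz)
  rw [zero_add, dist_comm, dist_eq_norm, ← hsum] at hzn
  exact hzn.le

theorem eventually_image_closedBall_mem_nhds {h : (ι → ℂ) → σ → ℂ} (e : σ ≃ ι)
    (hh : AnalyticAt ℂ h 0) (h₀ : h 0 = 0) :
    ∀ᶠ r in 𝓝[>] (0 : ℝ), (∀ z ∈ Metric.sphere 0 r, h z ≠ 0) →
      h '' Metric.closedBall 0 r ∈ 𝓝 0 := by
  have hcont : ∀ᶠ r in 𝓝 (0 : ℝ), ContinuousOn h (Metric.closedBall 0 r) := by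
    obtain ⟨ρ, hρ, hball⟩ := Metric.eventually_nhds_iff_ball.1 hh.eventually_continuousAt
    filter_upwards [eventually_lt_nhds hρ] with r hr z hz
    exact (hball z (Metric.closedBall_subset_ball hr hz)).continuousWithinAt
  filter_upwards [nhdsWithin_le_nhds hcont,
    nhdsWithin_le_nhds (eventually_forall_exists_norm_polynomialMap_sub_le hh),
    self_mem_nhdsWithin] with r hhr happrox hr hs
  obtain ⟨c, hc, hcs⟩ := (isCompact_sphere (0 : ι → ℂ) r).exists_forall_le' (a := 0)
    (hhr.norm.mono Metric.sphere_subset_closedBall) fun z hz => norm_pos_iff.2 (hs z hz)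
  refine Filter.mem_of_superset (Metric.ball_mem_nhds 0 hc)
    (ball_subset_image_closedBall_of_forall_exists_isOpenMap hr hhr h₀ hcs fun η hη => ?_)
  obtain ⟨R, hR⟩ := happrox (η / 2) (half_pos hη)
  obtain ⟨P, hPo, hP⟩ := exists_isOpenMap_polynomialMap_norm_sub_le e R hr (half_pos hη)
  refine ⟨polynomialMap P, continuous_polynomialMap P, hPo, fun z hz => ?_⟩
  linarith [norm_sub_le_norm_sub_add_norm_sub (polynomialMap P z) (polynomialMap R z) (h z),
    hP z hz, hR z hz]

end AnalyticMaps

section GenericLinearMaps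

open MeasureTheory Module Topology

theorem isOpen_setOf_forall_apply_ne_zero {𝕜 E F : Type*} [NontriviallyNormedField 𝕜]
    [NormedAddCommGroup E] [NormedSpace 𝕜 E] [NormedAddCommGroup F] [NormedSpace 𝕜 F]
    {K : Set E} (hK : IsCompact K) : IsOpen {L : E →L[𝕜] F | ∀ v ∈ K, L v ≠ 0} :=
  isOpen_iff_eventually.2 fun _ hL => hK.eventually_forall_of_forall_eventually fun v hv =>
    isBoundedBilinearMap_apply.continuous.continuousAt.eventually_ne (hL v hv)

variable {E F : Type*} [NormedAddCommGroup E] [NormedSpace ℂ E] [FiniteDimensional ℂ E]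
  [NormedAddCommGroup F] [NormedSpace ℂ F] [FiniteDimensional ℂ F]

theorem ae_forall_apply_ne_zero_of_dimH_lt [MeasurableSpace (E →L[ℂ] F)] [BorelSpace (E →L[ℂ] F)]
    (ν : Measure (E →L[ℂ] F)) [ν.IsAddHaarMeasure] {K : Set E} (hK : IsCompact K)
    (hdim : dimH K < finrank ℝ F) {φ : E →L[ℂ] ℂ} (hφ : ∀ v ∈ K, φ v ≠ 0) :
    ∀ᵐ L ∂ν, ∀ v ∈ K, L v ≠ 0 := by
  let : MeasurableSpace F := borel F
  have : BorelSpace F := ⟨rfl⟩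
  have := FiniteDimensional.proper ℂ (E →L[ℂ] F)
  have := FiniteDimensional.proper ℂ E
  have := FiniteDimensional.complexToReal F
  refine ae_mem_of_ae_add_linearMap_mem (ContinuousLinearMap.smulRightL ℂ E F φ).toLinearMap
    (Measure.hausdorffMeasure (finrank ℝ F)) ν
    (isOpen_setOf_forall_apply_ne_zero hK).measurableSet fun L => ?_
  -- `L v + φ v • c` vanishes for some `v ∈ K` only if `c` lies in this image of `K`.
  let g : E → F := fun v => -((φ v)⁻¹ • L v)
  have hg : dimH (g '' K) ≤ dimH K := dimH_image_le_of_locally_lipschitzOn fun v hv => by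
    have hgv : ContDiffAt ℂ 1 g v :=
      ((φ.contDiff.contDiffAt.inv (hφ v hv)).smul L.contDiff.contDiffAt).neg
    obtain ⟨C, t, ht, hC⟩ := hgv.exists_lipschitzOnWith
    exact ⟨C, t, mem_nhdsWithin_of_mem_nhds ht, hC⟩
  have hnull : Measure.hausdorffMeasure (finrank ℝ F) (g '' K) = 0 := by
    exact_mod_cast hausdorffMeasure_of_dimH_lt (d := finrank ℝ F) (hg.trans_lt hdim)
  refine measure_mono_null (fun c hc => ?_) hnull
  obtain ⟨v, hv, hvc⟩ : ∃ v ∈ K, L v + φ v • c = 0 := by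
    by_contra! h
    exact hc h
  refine ⟨v, hv, ?_⟩
  simp only [g, eq_neg_of_add_eq_zero_left hvc, smul_neg, neg_neg, inv_smul_smul₀ (hφ v hv)]

theorem exists_continuousLinearMap_forall_apply_ne_zero {Z : Set E} (hZ : IsCompact Z)
    (hdim : dimH Z < finrank ℝ F) : ∃ L : E →L[ℂ] F, ∀ v ∈ Z, v ≠ 0 → L v ≠ 0 := by
  let : MeasurableSpace (E →L[ℂ] F) := borel _
  have : BorelSpace (E →L[ℂ] F) := ⟨rfl⟩
  have := FiniteDimensional.proper ℂ (E →L[ℂ] F)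
  have := FiniteDimensional.proper ℂ E
  have hae : ∀ᵐ L : E →L[ℂ] F ∂Measure.addHaar, ∀ v ∈ Z \ {0}, L v ≠ 0 := by
    refine (HereditarilyLindelofSpace.isLindelof (Z \ {0})).induction_on
      (p := fun S => ∀ᵐ L : E →L[ℂ] F ∂Measure.addHaar, ∀ v ∈ S, L v ≠ 0)
      (fun S T hST h => h.mono fun L hL v hv => hL v (hST hv)) (fun S hS h => ?_) fun v hv => ?_
    · filter_upwards [(ae_ball_iff hS).2 h] with L hL v ⟨T, hT, hv⟩ using hL T hT v hv
    obtain ⟨φ, hφ⟩ := SeparatingDual.exists_ne_zero (R := ℂ) hv.2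
    have hφ0 := norm_pos_iff.2 hφ
    refine ⟨Z ∩ {u | ‖φ v‖ / 2 ≤ ‖φ u‖}, ?_, ae_forall_apply_ne_zero_of_dimH_lt _
      (hZ.inter_right (isClosed_le continuous_const φ.continuous.norm))
      ((dimH_mono Set.inter_subset_left).trans_lt hdim) (φ := φ) fun u hu => ?_⟩
    · exact Filter.inter_mem (Filter.mem_of_superset self_mem_nhdsWithin Set.sdiff_subset)
        (mem_nhdsWithin_of_mem_nhds (φ.continuous.norm.continuousAt.eventually_const_le
          (half_lt_self hφ0)))
    · exact norm_pos_iff.1 ((half_pos hφ0).trans_le hu.2)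
  obtain ⟨L, hL⟩ := hae.exists
  exact ⟨L, fun v hv hv0 => hL v ⟨hv, hv0⟩⟩

end GenericLinearMaps

section ZeroLoci

open Topology

variable {ι σ : Type*} [Fintype ι] [Fintype σ] {f : (ι → ℂ) → σ → ℂ} {W : Set (ι → ℂ)}

theorem image_zeroLocus_mem_nhds {κ : Type*} [Finite κ] (e : σ ⊕ κ ≃ ι) (hf : AnalyticAt ℂ f 0)
    (hf₀ : f 0 = 0) {L : (ι → ℂ) →L[ℂ] κ → ℂ} (hL : ∀ᶠ v in 𝓝[≠] 0, f v = 0 → L v ≠ 0)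
    (hW : W ∈ 𝓝 0) : L '' {v ∈ W | f v = 0} ∈ 𝓝 0 := by
  have := Fintype.ofFinite κ
  let h : (ι → ℂ) → σ ⊕ κ → ℂ := fun v => Sum.elim (f v) (L v)
  have hh : AnalyticAt ℂ h 0 := AnalyticAt.pi fun
    | .inl i => analyticAt_pi_iff.1 hf i
    | .inr k => analyticAt_pi_iff.1 (L.analyticAt 0) k
  have hh₀ : h 0 = 0 := by simp [h, hf₀]
  have hhL : ∀ᶠ v in 𝓝 0, v ≠ 0 → h v ≠ 0 := by
    filter_upwards [eventually_nhdsWithin_iff.1 hL] with v hv hv0 hhv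
    refine hv hv0 (funext fun i => ?_) (funext fun k => ?_)
    exacts [congrFun hhv (.inl i), congrFun hhv (.inr k)]
  obtain ⟨ρ, hρ, hball⟩ := Metric.eventually_nhds_iff_ball.1 (hhL.and hW)
  obtain ⟨r, himage, hr, hrρ⟩ := ((eventually_image_closedBall_mem_nhds e hh hh₀).and
    (Ioo_mem_nhdsGT hρ)).exists
  have hrball := Metric.closedBall_subset_ball (x := (0 : ι → ℂ)) hrρ
  have hnear := himage fun v hv => (hball v (hrball (Metric.sphere_subset_closedBall hv))).1
    (ne_zero_of_mem_sphere hr.ne' ⟨v, hv⟩)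
  have hcont : Continuous fun c : κ → ℂ => (Sum.elim 0 c : σ ⊕ κ → ℂ) :=
    continuous_pi fun
      | .inl _ => continuous_const
      | .inr k => continuous_apply k
  filter_upwards [hcont.continuousAt.preimage_mem_nhds (by simpa using hnear)] with c ⟨v, hv, hvc⟩
  exact ⟨v, ⟨(hball v (hrball hv)).2, funext fun i => congrFun hvc (.inl i)⟩,
    funext fun k => congrFun hvc (.inr k)⟩

theorem two_mul_card_sub_card_le_dimH_zeroLocus_zero (hf : AnalyticAt ℂ f 0) (hf₀ : f 0 = 0)
    (hW : W ∈ 𝓝 0) :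
    2 * ((Fintype.card ι - Fintype.card σ : ℕ) : ENNReal) ≤ dimH {v ∈ W | f v = 0} := by
  by_contra! hlt
  let κ := Fin (Fintype.card ι - Fintype.card σ)
  have hrank : (Module.finrank ℝ (κ → ℂ) : ENNReal) =
      2 * ((Fintype.card ι - Fintype.card σ : ℕ) : ENNReal) := by
    simp [κ, Module.finrank_pi_fintype, mul_comm]
  have hcard : Fintype.card σ ≤ Fintype.card ι := by
    by_contra! h
    simp [Nat.sub_eq_zero_of_le h.le] at hlt
  let e : σ ⊕ κ ≃ ι := Fintype.equivOfCardEq (by simp [κ, hcard])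
  obtain ⟨K, hK, hKsub, hKc⟩ :=
    local_compact_nhds (Filter.inter_mem hW hf.eventually_continuousAt)
  let Z : Set (ι → ℂ) := {v ∈ K | f v = 0}
  have hZ : IsCompact Z := hKc.of_isClosed_subset
    (ContinuousOn.preimage_isClosed_of_isClosed
      (fun v hv => (hKsub hv).2.continuousWithinAt) hKc.isClosed isClosed_singleton)
    fun v hv => hv.1
  have hZW : Z ⊆ {v ∈ W | f v = 0} := fun v hv => ⟨(hKsub hv.1).1, hv.2⟩
  have hZdim : dimH Z < Module.finrank ℝ (κ → ℂ) := hrank ▸ (dimH_mono hZW).trans_lt hlt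
  obtain ⟨L, hL⟩ := exists_continuousLinearMap_forall_apply_ne_zero hZ hZdim
  have hLZ : L '' Z ∈ 𝓝 0 := image_zeroLocus_mem_nhds e hf hf₀ (by
    filter_upwards [mem_nhdsWithin_of_mem_nhds hK, self_mem_nhdsWithin] with v hvK hv0 hfv
      using hL v ⟨hvK, hfv⟩ hv0) hK
  refine hZdim.not_ge ?_
  rw [← Real.dimH_of_mem_nhds hLZ]
  exact L.lipschitz.dimH_image_le Z

theorem two_mul_card_sub_card_le_dimH_zeroLocus {x : ι → ℂ} (hf : AnalyticAt ℂ f x) (hx : f x = 0)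
    (hW : W ∈ 𝓝 x) :
    2 * ((Fintype.card ι - Fintype.card σ : ℕ) : ENNReal) ≤ dimH {v ∈ W | f v = 0} := by
  have htranslate : (x + ·) '' {v ∈ (x + ·) ⁻¹' W | f (x + v) = 0} ⊆ {v ∈ W | f v = 0} := by
    rintro _ ⟨v, hv, rfl⟩
    exact hv
  refine le_trans ?_ (dimH_mono htranslate)
  rw [(isometry_add_left x).dimH_image]
  rw [← add_zero x] at hf hx hW
  refine two_mul_card_sub_card_le_dimH_zeroLocus_zero (f := fun v => f (x + v)) ?_ hx ?_
  · exact hf.fun_comp (by fun_prop)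
  · exact (continuous_const_add x).continuousAt.preimage_mem_nhds hW

end ZeroLoci

section Forms

open Topology

variable {ι : Type*} [LinearOrder ι]

/-- The coefficient of `dx_J` in the wedge product of the `1`-form `∑ i, b i dx_i` with the form
`∑ I, A I dx_I`. Only the values of `A` on the sets `J.erase i` enter, so a `p`-form is encoded by
a family `A` defined on all finite sets, of which those of cardinality `p` matter. -/
def wedgeCoeff {E R : Type*} [CommRing R] (b : ι → E → R) (A : Finset ι → E → R) (J : Finset ι)
    (x : E) : R :=
  ∑ i ∈ J, (-1) ^ (J.filter (· < i)).card * (b i x * A (J.erase i) x)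

theorem wedgeCoeff_insert_of_forall_eq_zero {E R : Type*} [CommRing R] {b : ι → E → R}
    {A : Finset ι → E → R} {I : Finset ι} {j : ι} {x : E} (hj : j ∉ I) (hb : ∀ i ∈ I, b i x = 0) :
    wedgeCoeff b A (insert j I) x =
      (-1) ^ ((insert j I).filter (· < j)).card * (b j x * A I x) := by
  rw [wedgeCoeff, Finset.sum_insert hj, Finset.erase_insert hj, Finset.sum_eq_zero, add_zero]
  exact fun i hi => by rw [hb i hi, zero_mul, mul_zero]

theorem two_mul_card_sub_card_le_dimH_of_wedgeCoeff_eq_zero [Fintype ι] {b : ι → (ι → ℂ) → ℂ}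
    {A : Finset ι → (ι → ℂ) → ℂ} {I : Finset ι} {x : ι → ℂ} (hb : ∀ i ∈ I, AnalyticAt ℂ (b i) x)
    (hbx : ∀ i ∈ I, b i x = 0) (hA : ContinuousAt (A I) x) (hAx : A I x ≠ 0)
    (hwedge : ∀ᶠ y in 𝓝 x, ∀ j ∉ I, wedgeCoeff b A (insert j I) y = 0) {W : Set (ι → ℂ)}
    (hW : W ∈ 𝓝 x) :
    2 * ((Fintype.card ι - I.card : ℕ) : ENNReal) ≤ dimH {y ∈ W | ∀ i, b i y = 0} := by
  have hzero : ∀ᶠ y in 𝓝 x, (∀ i ∈ I, b i y = 0) → ∀ i, b i y = 0 := by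
    filter_upwards [hA.eventually_ne hAx, hwedge] with y hAy hy hby j
    by_cases hj : j ∈ I
    · exact hby j hj
    have hyj := hy j hj
    rw [wedgeCoeff_insert_of_forall_eq_zero hj hby] at hyj
    simpa [hAy] using hyj
  rw [← Fintype.card_coe I]
  refine (two_mul_card_sub_card_le_dimH_zeroLocus (f := fun y (i : I) => b i y)
    (AnalyticAt.pi fun i => hb i i.2) (funext fun i => hbx i i.2)
    (Filter.inter_mem hW hzero)).trans (dimH_mono ?_)
  rintro y ⟨⟨hyW, hy⟩, hby⟩
  exact ⟨hyW, hy fun i hi => congrFun hby ⟨i, hi⟩⟩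

theorem stmt_3_general [Fintype ι] (p : ℕ) {U : Set (ι → ℂ)} (hU : IsOpen U)
    {b : ι → (ι → ℂ) → ℂ} (hb : ∀ i, AnalyticOnNhd ℂ (b i) U)
    (hEmpty : (⋂ A ∈ {A : Finset ι → (ι → ℂ) → ℂ |
        (∀ I, I.card = p → ContinuousOn (A I) U) ∧
        ∀ J, J.card = p + 1 → ∀ x ∈ U, wedgeCoeff b A J x = 0},
      {x ∈ U | ∀ I, I.card = p → A I x = 0}) = ∅) :
    ∀ x ∈ {x ∈ U | ∀ i, b i x = 0}, ∀ W ∈ 𝓝 x,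
      ENNReal.ofReal (2 * (Fintype.card ι : ℝ) - 2 * p) ≤
        dimH ({x ∈ U | ∀ i, b i x = 0} ∩ W) := by
  rintro x ⟨hxU, hbx⟩ W hW
  obtain ⟨A, ⟨hA, hwedge⟩, I, rfl, hAI⟩ : ∃ A : Finset ι → (ι → ℂ) → ℂ,
      ((∀ I, I.card = p → ContinuousOn (A I) U) ∧
        ∀ J, J.card = p + 1 → ∀ x ∈ U, wedgeCoeff b A J x = 0) ∧
      ∃ I, I.card = p ∧ A I x ≠ 0 := by
    by_contra! h
    exact Set.eq_empty_iff_forall_notMem.1 hEmpty x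
      (Set.mem_iInter₂.2 fun A hA => ⟨hxU, h A hA⟩)
  have hxU' := hU.mem_nhds hxU
  have hdim := two_mul_card_sub_card_le_dimH_of_wedgeCoeff_eq_zero (A := A) (I := I)
    (fun i _ => hb i x hxU) (fun i _ => hbx i) ((hA I rfl).continuousAt hxU') hAI
    (Filter.mem_of_superset hxU' fun y hy j hj =>
      hwedge _ (Finset.card_insert_of_notMem hj) y hy) (Filter.inter_mem hxU' hW)
  calc ENNReal.ofReal (2 * (Fintype.card ι : ℝ) - 2 * I.card)
      = 2 * ((Fintype.card ι - I.card : ℕ) : ENNReal) := by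
        rw [← mul_sub, ← Nat.cast_sub I.card_le_univ, ENNReal.ofReal_mul zero_le_two]
        simp
    _ ≤ dimH {y ∈ U ∩ W | ∀ i, b i y = 0} := hdim
    _ ≤ dimH ({y ∈ U | ∀ i, b i y = 0} ∩ W) :=
        dimH_mono fun y hy => ⟨⟨hy.1.1, hy.2⟩, hy.1.2⟩

end Forms

/-- Corollary 2.4: let `ω = Σ_i b_i dx_i` be a holomorphic 1-form on a connected
open `U ⊆ ℂ^ℓ`.  If the intersection of `V(ψ)` over all holomorphic `p`-forms
`ψ` with `ω ∧ ψ = 0` is empty, then every irreducible component of `V(ω)` has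
codimension at most `p`: every point of `V(ω)` has local (Hausdorff) dimension
at least `2(ℓ−p)` in every neighborhood. -/
theorem stmt_3 (ℓ p : ℕ) (U : Set (Fin ℓ → ℂ)) (hUo : IsOpen U) (hUc : IsConnected U)
    (b : Fin ℓ → (Fin ℓ → ℂ) → ℂ)
    (hb : ∀ i, AnalyticOnNhd ℂ (b i) U)
    (hEmpty :
      (⋂ A ∈ {A : Finset (Fin ℓ) → (Fin ℓ → ℂ) → ℂ |
          (∀ I : Finset (Fin ℓ), I.card = p → AnalyticOnNhd ℂ (A I) U) ∧
          (∀ J : Finset (Fin ℓ), J.card = p + 1 → ∀ x ∈ U,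
            ∑ i ∈ J, (-1 : ℂ) ^ (J.filter (· < i)).card *
              (b i x * A (J.erase i) x) = 0)},
        {x ∈ U | ∀ I : Finset (Fin ℓ), I.card = p → A I x = 0}) = ∅) :
    ∀ x ∈ {x ∈ U | ∀ i, b i x = 0}, ∀ W ∈ nhds x,
      ENNReal.ofReal (2 * (ℓ : ℝ) - 2 * p) ≤
        dimH ({x ∈ U | ∀ i, b i x = 0} ∩ W) := by
  simpa only [Fintype.card_fin] using stmt_3_general p hUo hb (Set.subset_eq_empty
    (Set.biInter_subset_biInter_left fun A hA => ⟨fun I hI => (hA.1 I hI).continuousOn, hA.2⟩)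
    hEmpty)
end
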